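/- arXiv:1308.3806 — 3 statements merged into one kernel-verified Lean document; each statement's English description precedes it below -/
import Mathlib

section
/- Let p be a prime, n ≥ 1 an integer and τ ≥ 1 a real number. Then W_{τ,n}(p) = {x ∈ ℚ_p^n : |qx − r|_p < max(|r|, q)^{−τ} for infinitely many p-primitive (r,q) ∈ ℤ^n × ℕ}, where (r,q) = (r_1,…,r_n,q) ∈ ℤ^{n+1} is called p-primitive if at least one of the integers r_1,…,r_n,q is not divisible by p. -/
/-!
Write `M(r, q) = max(|r|, q)`. The quantity `h(r, q) = M(r, q) * |q x - r|_p` does not change when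
`(r, q)` is divided by `p`, and since `1 ≤ τ` such a division preserves the approximation
condition. So every solution has a `p`-primitive part which is a solution with the same value of
`h` (`exists_primitive_part`).

If `x ∈ W_{τ,n}(p)`, there are solutions with `h` arbitrarily small: for `τ > 1` because
`h < M ^ (1 - τ)` and `M` is unbounded on the infinite set of solutions (`exists_small_of_infinite`),
and for `τ = 1`, whatever `x` is, by the `p`-adic Dirichlet theorem, whose exponent `(n + 1) / n`
exceeds `1` (`exists_small_dirichlet`). Passing to primitive parts, if there were only finitely many
primitive solutions, one of them would have `h = 0`, that is `q x = r`. But then all its multiples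
by integers `1 + p s` are primitive solutions too (`infinite_of_exact`), a contradiction.
-/

open Filter
open scoped ENNReal

/-- The approximation condition `|qx - r|_p < max(|r|, q)^{-τ}` for
`(r, q) ∈ ℤⁿ × ℕ` (with `q ≥ 1`) and `x ∈ ℚ_pⁿ`, where `|·|_p` is the `p`-adic
supremum norm and `|r|` the supremum norm of the integer vector `r`. -/
def PadicApprox (p : ℕ) [Fact p.Prime] (n : ℕ) (τ : ℝ) (x : Fin n → ℚ_[p])
    (rq : (Fin n → ℤ) × ℕ) : Prop :=
  0 < rq.2 ∧ ∀ i, ‖(rq.2 : ℚ_[p]) * x i - ((rq.1 i : ℤ) : ℚ_[p])‖ <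
    ((max rq.2 (Finset.univ.sup fun j => (rq.1 j).natAbs) : ℕ) : ℝ) ^ (-τ)

/-- The limsup set `W_{τ,n}(p)` of points of `ℚ_pⁿ` approximable at order `τ`
by infinitely many `(r, q) ∈ ℤⁿ × ℕ`. -/
def WPadic (p : ℕ) [Fact p.Prime] (n : ℕ) (τ : ℝ) : Set (Fin n → ℚ_[p]) :=
  {x | {rq : (Fin n → ℤ) × ℕ | PadicApprox p n τ x rq}.Infinite}

/-- `(r, q) ∈ ℤⁿ × ℕ` is `p`-primitive if at least one of the integers
`r 1, …, r n, q` is not divisible by `p`. -/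
def PPrimitive (p : ℕ) (n : ℕ) (rq : (Fin n → ℤ) × ℕ) : Prop :=
  ¬ (p : ℕ) ∣ rq.2 ∨ ∃ i, ¬ ((p : ℤ) ∣ rq.1 i)

/-- The height `max(|r|, q)` of `(r, q)`. -/
def padicHeight (n : ℕ) (rq : (Fin n → ℤ) × ℕ) : ℕ :=
  max rq.2 (Finset.univ.sup fun j => (rq.1 j).natAbs)

lemma padicHeight_mul (n : ℕ) (m : ℕ) (r : Fin n → ℤ) (q : ℕ) :
    padicHeight n (fun i => (m : ℤ) * r i, m * q) = m * padicHeight n (r, q) := by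
  have key : (Finset.univ.sup fun j => ((m : ℤ) * r j).natAbs)
      = m * Finset.univ.sup fun j => (r j).natAbs := by
    simp only [Int.natAbs_mul, Int.natAbs_natCast]
    refine (Finset.apply_sup_eq_sup_comp (fun a : ℕ => m * a) ?_ ?_).symm
    · intro a b
      exact Nat.mul_max_mul_left m a b |>.symm
    · simp
  simp only [padicHeight, key, Nat.mul_max_mul_left]

/-- Every solution has a `p`-primitive part: a primitive solution with the same value of
`max(|r|, q) * |q x - r|_p`, coordinate by coordinate. -/
lemma exists_primitive_part (p : ℕ) [hp : Fact p.Prime] (n : ℕ) (τ : ℝ) (hτ : 1 ≤ τ)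
    (x : Fin n → ℚ_[p]) (q : ℕ) : ∀ r : Fin n → ℤ, PadicApprox p n τ x (r, q) →
    ∃ rq' : (Fin n → ℤ) × ℕ, PPrimitive p n rq' ∧ PadicApprox p n τ x rq' ∧
      ∀ i, (padicHeight n rq' : ℝ) * ‖(rq'.2 : ℚ_[p]) * x i - (rq'.1 i : ℚ_[p])‖
        = (padicHeight n (r, q) : ℝ) * ‖(q : ℚ_[p]) * x i - (r i : ℚ_[p])‖ := by
  induction q using Nat.strong_induction_on with
  | _ q ih =>
    intro r h
    by_cases hprim : PPrimitive p n (r, q)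
    · exact ⟨(r, q), hprim, h, fun i => rfl⟩
    · simp only [PPrimitive, not_or, not_not, not_exists] at hprim
      obtain ⟨⟨q₁, rfl⟩, hr⟩ := hprim
      choose r₁ hr₁ using hr
      obtain rfl : r = fun i => (p : ℤ) * r₁ i := funext hr₁
      have hp1 : 1 < p := hp.out.one_lt
      have hp0 : (0 : ℝ) < p := by exact_mod_cast hp.out.pos
      obtain ⟨hq, hx⟩ := h
      simp only at hq hx
      have hq₁ : 0 < q₁ := Nat.pos_of_mul_pos_left hq
      have hM : 0 < padicHeight n (r₁, q₁) := lt_of_lt_of_le hq₁ (le_max_left _ _)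
      have hMr : (0 : ℝ) < padicHeight n (r₁, q₁) := by exact_mod_cast hM
      have hnorm : ∀ i, ‖((p * q₁ : ℕ) : ℚ_[p]) * x i - (((p : ℤ) * r₁ i : ℤ) : ℚ_[p])‖
          = (p : ℝ)⁻¹ * ‖(q₁ : ℚ_[p]) * x i - (r₁ i : ℚ_[p])‖ := by
        intro i
        rw [← Padic.norm_p (p := p), ← norm_mul]
        congr 1
        push_cast
        ring
      have hmul := padicHeight_mul n p r₁ q₁
      have h₁ : PadicApprox p n τ x (r₁, q₁) := by
        refine ⟨hq₁, fun i => ?_⟩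
        have h2 := hx i
        rw [hnorm i] at h2
        change _ < ((padicHeight n (fun i => (p : ℤ) * r₁ i, p * q₁) : ℕ) : ℝ) ^ (-τ) at h2
        change _ < ((padicHeight n (r₁, q₁) : ℕ) : ℝ) ^ (-τ)
        rw [hmul, Nat.cast_mul, Real.mul_rpow hp0.le hMr.le] at h2
        have h3 : (p : ℝ) ^ (-τ) ≤ (p : ℝ)⁻¹ := by
          rw [← Real.rpow_neg_one]
          exact Real.rpow_le_rpow_of_exponent_le (by exact_mod_cast hp1.le) (by linarith)
        have h4 := h2.trans_le
          (mul_le_mul_of_nonneg_right h3 (Real.rpow_nonneg hMr.le (-τ)))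
        exact lt_of_mul_lt_mul_left h4 (inv_nonneg.2 hp0.le)
      obtain ⟨rq', a, b, c⟩ := ih q₁ (by nlinarith) r₁ h₁
      refine ⟨rq', a, b, fun i => ?_⟩
      rw [c i, hnorm i, hmul, Nat.cast_mul]
      field_simp

/-- A primitive `(r, q)` with `q x = r` yields infinitely many primitive solutions, namely its
multiples by `1 + p s`, `s ∈ ℕ`. -/
lemma infinite_of_exact (p : ℕ) [hp : Fact p.Prime] (n : ℕ) (τ : ℝ)
    (x : Fin n → ℚ_[p]) (rq : (Fin n → ℤ) × ℕ) (hprim : PPrimitive p n rq) (hq : 0 < rq.2)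
    (hx : ∀ i, (rq.2 : ℚ_[p]) * x i - (rq.1 i : ℚ_[p]) = 0) :
    {rq : (Fin n → ℤ) × ℕ | PPrimitive p n rq ∧ PadicApprox p n τ x rq}.Infinite := by
  have hp0 := hp.out.pos
  refine Set.infinite_of_injective_forall_mem
    (f := fun s : ℕ => ((fun i => ((1 + p * s : ℕ) : ℤ) * rq.1 i, (1 + p * s) * rq.2) :
      (Fin n → ℤ) × ℕ)) ?_ ?_
  · intro s t hst
    have h := Nat.eq_of_mul_eq_mul_right hq (congrArg Prod.snd hst)
    exact Nat.eq_of_mul_eq_mul_left hp0 (Nat.add_left_cancel h)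
  · intro s
    have hcop : ¬ p ∣ 1 + p * s := by
      intro h
      exact hp.out.one_lt.ne' (Nat.dvd_one.1 ((Nat.dvd_add_left (dvd_mul_right p s)).1 h))
    have hq' : 0 < (1 + p * s) * rq.2 := by positivity
    refine ⟨?_, hq', fun i => ?_⟩
    · rcases hprim with h | ⟨i, h⟩
      · exact Or.inl fun hd => (hp.out.dvd_mul.1 hd).elim hcop h
      · refine Or.inr ⟨i, fun hd => ?_⟩
        exact ((Nat.prime_iff_prime_int.1 hp.out).dvd_or_dvd hd).elim
          (fun h' => hcop (Int.natCast_dvd_natCast.1 h')) h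
    · have h0 : (((1 + p * s) * rq.2 : ℕ) : ℚ_[p]) * x i
          - ((((1 + p * s : ℕ) : ℤ) * rq.1 i : ℤ) : ℚ_[p]) = 0 := by
        have := congrArg (fun y => ((1 + p * s : ℕ) : ℚ_[p]) * y) (hx i)
        simp only [mul_zero] at this
        rw [← this]
        push_cast
        ring
      simp only
      rw [h0, norm_zero]
      refine Real.rpow_pos_of_pos ?_ _
      exact_mod_cast lt_of_lt_of_le hq' (le_max_left _ _)

lemma finite_padicHeight_le (n B : ℕ) :
    {rq : (Fin n → ℤ) × ℕ | padicHeight n rq ≤ B}.Finite := by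
  have hfin : ((Set.Icc (fun _ => -(B : ℤ)) (fun _ => (B : ℤ)) : Set (Fin n → ℤ)) ×ˢ
      (Set.Iic B : Set ℕ)).Finite := (Set.finite_Icc _ _).prod (Set.finite_Iic _)
  refine hfin.subset ?_
  intro rq h
  have h' := max_le_iff.1 (show max _ _ ≤ B from h)
  have h2 : ∀ i, (rq.1 i).natAbs ≤ B := fun i => (Finset.sup_le_iff.1 h'.2) i (Finset.mem_univ i)
  refine ⟨⟨fun i => ?_, fun i => ?_⟩, h'.1⟩
  · have := h2 i
    simp only
    omega
  · have := h2 i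
    simp only
    omega

lemma exists_small_of_infinite (p : ℕ) [hp : Fact p.Prime] (n : ℕ) (τ : ℝ) (hτ : 1 < τ)
    (x : Fin n → ℚ_[p]) (hinf : {rq : (Fin n → ℤ) × ℕ | PadicApprox p n τ x rq}.Infinite)
    (ε : ℝ) (hε : 0 < ε) :
    ∃ rq : (Fin n → ℤ) × ℕ, PadicApprox p n τ x rq ∧
      ∀ i, (padicHeight n rq : ℝ) * ‖(rq.2 : ℚ_[p]) * x i - (rq.1 i : ℚ_[p])‖ < ε := by
  have ht : Tendsto (fun m : ℕ => (m : ℝ) ^ (-(τ - 1))) atTop (nhds 0) :=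
    (tendsto_rpow_neg_atTop (by linarith)).comp tendsto_natCast_atTop_atTop
  obtain ⟨B, hB⟩ := eventually_atTop.1 (ht.eventually (gt_mem_nhds hε))
  obtain ⟨rq, hrq, hbig⟩ := hinf.exists_notMem_finite (finite_padicHeight_le n B)
  have hbig' : B < padicHeight n rq := not_le.1 hbig
  refine ⟨rq, hrq, fun i => ?_⟩
  have hpos : (0 : ℝ) < padicHeight n rq := by exact_mod_cast (Nat.zero_le B).trans_lt hbig'
  calc (padicHeight n rq : ℝ) * ‖(rq.2 : ℚ_[p]) * x i - (rq.1 i : ℚ_[p])‖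
      ≤ (padicHeight n rq : ℝ) * (padicHeight n rq : ℝ) ^ (-τ) :=
        mul_le_mul_of_nonneg_left (hrq.2 i).le hpos.le
    _ = (padicHeight n rq : ℝ) ^ (-(τ - 1)) := by
        rw [show -(τ - 1) = 1 + -τ by ring, Real.rpow_add hpos, Real.rpow_one]
    _ < ε := hB _ hbig'.le

lemma one_le_natAbs_mul_norm (p : ℕ) [hp : Fact p.Prime] (a : ℤ) (ha : a ≠ 0) :
    (1 : ℝ) ≤ (a.natAbs : ℝ) * ‖(a : ℚ_[p])‖ := by
  have hdvd : ((p ^ padicValInt p a : ℕ) : ℤ) ∣ a := by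
    have := (padicValInt_dvd_iff (p := p) (padicValInt p a) a).2 (Or.inr le_rfl)
    exact_mod_cast this
  have hle : p ^ padicValInt p a ≤ a.natAbs :=
    Nat.le_of_dvd (Int.natAbs_pos.2 ha) (Int.natCast_dvd.1 hdvd)
  have hnorm : ‖(a : ℚ_[p])‖ = ((p : ℝ) ^ padicValInt p a)⁻¹ := by
    rw [Padic.norm_eq_zpow_neg_valuation (by exact_mod_cast ha), Padic.valuation_intCast,
      zpow_neg, zpow_natCast]
  have hpp : (0 : ℝ) < (p : ℝ) ^ padicValInt p a := by
    have : (0 : ℝ) < p := by exact_mod_cast hp.out.pos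
    positivity
  rw [hnorm, ← div_eq_mul_inv, one_le_div hpp]
  exact_mod_cast hle

/-- The pigeonhole step of the `p`-adic Dirichlet theorem, to be applied with `y = p ^ d * x`: the
`(Q + 1) ^ (n + 1)` integer points `(r, q)` of `[0, Q] ^ (n + 1)`, where `Q = p ^ (n t)`, outnumber
the possible residues of `q y - p ^ d * r` modulo `p ^ ((n + 1) t)`. -/
lemma dirichlet_pigeonhole (p : ℕ) [hp : Fact p.Prime] (n : ℕ) (d t : ℕ)
    (y : Fin n → ℤ_[p]) :
    ∃ (r : Fin n → ℤ) (q : ℤ), (r ≠ 0 ∨ q ≠ 0) ∧ q.natAbs ≤ p ^ (n * t) ∧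
      (∀ i, (r i).natAbs ≤ p ^ (n * t)) ∧
      ∀ i, ‖(q : ℤ_[p]) * y i - (p : ℤ_[p]) ^ d * (r i : ℤ_[p])‖
        ≤ (p : ℝ) ^ (-(((n + 1) * t : ℕ) : ℤ)) := by
  set K := (n + 1) * t with hK
  set Q := p ^ (n * t) with hQ
  have : NeZero (p ^ K) := ⟨pow_ne_zero _ hp.out.ne_zero⟩
  let f : (Fin n → Fin (Q + 1)) × Fin (Q + 1) → (Fin n → ZMod (p ^ K)) := fun v i =>
    PadicInt.toZModPow K
      (((v.2 : ℕ) : ℤ_[p]) * y i - (p : ℤ_[p]) ^ d * (((v.1 i : ℕ)) : ℤ_[p]))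
  have hcard : Fintype.card (Fin n → ZMod (p ^ K))
      < Fintype.card ((Fin n → Fin (Q + 1)) × Fin (Q + 1)) := by
    simp only [Fintype.card_prod, Fintype.card_fun, Fintype.card_fin, ZMod.card]
    rw [← pow_succ]
    calc (p ^ K) ^ n = Q ^ (n + 1) := by
          rw [hQ, hK, ← pow_mul, ← pow_mul]
          congr 1
          ring
      _ < (Q + 1) ^ (n + 1) := Nat.pow_lt_pow_left (Nat.lt_succ_self _) (Nat.succ_ne_zero n)
  obtain ⟨v, w, hvw, hf⟩ := Fintype.exists_ne_map_eq_of_card_lt f hcard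
  refine ⟨fun i => ((v.1 i : ℕ) : ℤ) - ((w.1 i : ℕ) : ℤ), ((v.2 : ℕ) : ℤ) - ((w.2 : ℕ) : ℤ),
    ?_, ?_, ?_, ?_⟩
  · by_contra! hcon
    apply hvw
    refine Prod.ext (funext fun i => Fin.ext ?_) (Fin.ext ?_)
    · have := congrFun hcon.1 i
      simp only [Pi.zero_apply] at this
      omega
    · omega
  · have := v.2.isLt
    have := w.2.isLt
    omega
  · intro i
    have := (v.1 i).isLt
    have := (w.1 i).isLt
    simp only
    omega
  · intro i
    have h := congrFun hf i
    simp only [f] at h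
    rw [PadicInt.norm_le_pow_iff_mem_span_pow, ← PadicInt.ker_toZModPow, RingHom.mem_ker]
    rw [← sub_eq_zero, ← map_sub] at h
    rw [← h]
    congr 1
    push_cast
    ring

/-- A consequence of the `p`-adic Dirichlet theorem: for every `x ∈ ℚ_pⁿ`, solutions for `τ = 1`
with `max(|r|, q) * |q x - r|_p` arbitrarily small exist. -/
lemma exists_small_dirichlet (p : ℕ) [hp : Fact p.Prime] (n : ℕ) (x : Fin n → ℚ_[p])
    (ε : ℝ) (hε : 0 < ε) :
    ∃ rq : (Fin n → ℤ) × ℕ, PadicApprox p n 1 x rq ∧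
      ∀ i, (padicHeight n rq : ℝ) * ‖(rq.2 : ℚ_[p]) * x i - (rq.1 i : ℚ_[p])‖ < ε := by
  have hp1 : (1 : ℝ) < p := by exact_mod_cast hp.out.one_lt
  have hp0 : (0 : ℝ) < p := by linarith
  -- a common power of `p` clearing the denominators of all coordinates
  obtain ⟨d, hd⟩ : ∃ d : ℕ, ∀ i, ‖x i‖ ≤ (p : ℝ) ^ d := by
    obtain ⟨d, hd⟩ := pow_unbounded_of_one_lt ‖x‖ hp1
    exact ⟨d, fun i => (norm_le_pi_norm x i).trans hd.le⟩
  have hnp : ‖(p : ℚ_[p]) ^ d‖ = ((p : ℝ) ^ d)⁻¹ := by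
    rw [norm_pow, Padic.norm_p, inv_pow]
  have hpd : (0 : ℝ) < (p : ℝ) ^ d := by positivity
  let y : Fin n → ℤ_[p] := fun i => ⟨(p : ℚ_[p]) ^ d * x i, by
    rw [norm_mul, hnp, inv_mul_le_iff₀ hpd, mul_one]
    exact hd i⟩
  have hδ : 0 < min ε 1 := lt_min hε one_pos
  obtain ⟨t, ht⟩ := pow_unbounded_of_one_lt ((p : ℝ) ^ d / min ε 1) hp1
  have hpt : (0 : ℝ) < (p : ℝ) ^ t := by positivity
  have ht' : (p : ℝ) ^ d / (p : ℝ) ^ t < min ε 1 := by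
    rw [div_lt_iff₀ hδ] at ht
    rw [div_lt_iff₀ hpt]
    linarith
  obtain ⟨r, q, hne, hq, hr, hrq⟩ := dirichlet_pigeonhole p n d t y
  have hbound : ∀ i, (p : ℝ) ^ (n * t) * ‖(q : ℚ_[p]) * x i - (r i : ℚ_[p])‖ < min ε 1 := by
    intro i
    have h := hrq i
    rw [← PadicInt.padic_norm_e_of_padicInt] at h
    have he : (((q : ℤ_[p]) * y i - (p : ℤ_[p]) ^ d * (r i : ℤ_[p]) : ℤ_[p]) : ℚ_[p])
        = (p : ℚ_[p]) ^ d * ((q : ℚ_[p]) * x i - (r i : ℚ_[p])) := by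
      push_cast
      simp only [y]
      ring
    rw [he, norm_mul, hnp, zpow_neg, zpow_natCast, inv_mul_le_iff₀ hpd] at h
    refine lt_of_le_of_lt ?_ ht'
    calc (p : ℝ) ^ (n * t) * ‖(q : ℚ_[p]) * x i - (r i : ℚ_[p])‖
        ≤ (p : ℝ) ^ (n * t) * ((p : ℝ) ^ d * ((p : ℝ) ^ ((n + 1) * t))⁻¹) := by gcongr
      _ = (p : ℝ) ^ d / (p : ℝ) ^ t := by
        rw [add_mul, one_mul, pow_add]
        field_simp
  -- `q = 0` would force `M * |r|_p < 1` for a nonzero integer vector `r`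
  have hq0 : q ≠ 0 := by
    rintro rfl
    have hr0 : r ≠ 0 := hne.resolve_right (by simp)
    obtain ⟨i, hi⟩ := Function.ne_iff.1 hr0
    have h1 := one_le_natAbs_mul_norm p (r i) hi
    have h2 := (hbound i).trans_le (min_le_right _ _)
    simp only [Int.cast_zero, zero_mul, zero_sub, norm_neg] at h2
    have h3 : ((r i).natAbs : ℝ) ≤ (p : ℝ) ^ (n * t) := by exact_mod_cast hr i
    have h4 := mul_le_mul_of_nonneg_right h3 (norm_nonneg (r i : ℚ_[p]))
    linarith
  -- the sign of `q` is normalised by multiplying `(r, q)` with it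
  let rq : (Fin n → ℤ) × ℕ := (fun i => q.sign * r i, q.natAbs)
  have hsign : q.sign.natAbs = 1 := Int.natAbs_sign_of_ne_zero hq0
  have hnorm : ∀ i, ‖(rq.2 : ℚ_[p]) * x i - (rq.1 i : ℚ_[p])‖
      = ‖(q : ℚ_[p]) * x i - (r i : ℚ_[p])‖ := by
    intro i
    simp only [rq]
    rcases lt_or_gt_of_ne hq0 with h | h
    · have : ((q.natAbs : ℕ) : ℚ_[p]) = -(q : ℚ_[p]) := by
        have h' : ((q.natAbs : ℕ) : ℤ) = -q := by omega
        have h'' := congrArg (Int.cast : ℤ → ℚ_[p]) h'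
        rwa [Int.cast_natCast, Int.cast_neg] at h''
      rw [this, Int.sign_eq_neg_one_of_neg h, ← norm_neg]
      congr 1
      push_cast
      ring
    · have : ((q.natAbs : ℕ) : ℚ_[p]) = (q : ℚ_[p]) := by
        have h' : ((q.natAbs : ℕ) : ℤ) = q := by omega
        have h'' := congrArg (Int.cast : ℤ → ℚ_[p]) h'
        rwa [Int.cast_natCast] at h''
      rw [this, Int.sign_eq_one_of_pos h, one_mul]
  have hheight : padicHeight n rq ≤ p ^ (n * t) := by
    refine max_le hq (Finset.sup_le fun i _ => ?_)
    simp only [rq, Int.natAbs_mul, hsign, one_mul]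
    exact hr i
  have hsmall : ∀ i, (padicHeight n rq : ℝ) *
      ‖(rq.2 : ℚ_[p]) * x i - (rq.1 i : ℚ_[p])‖ < min ε 1 := by
    intro i
    rw [hnorm i]
    refine lt_of_le_of_lt (mul_le_mul_of_nonneg_right ?_ (norm_nonneg _)) (hbound i)
    exact_mod_cast hheight
  have hq' : 0 < rq.2 := Int.natAbs_pos.2 hq0
  refine ⟨rq, ⟨hq', fun i => ?_⟩, fun i => (hsmall i).trans_le (min_le_left _ _)⟩
  have hpos : (0 : ℝ) < padicHeight n rq := by
    exact_mod_cast lt_of_lt_of_le hq' (le_max_left _ _)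
  change _ < ((padicHeight n rq : ℕ) : ℝ) ^ (-1 : ℝ)
  rw [Real.rpow_neg_one, ← one_div, lt_div_iff₀' hpos]
  exact (hsmall i).trans_le (min_le_right _ _)

theorem WPadic_eq_pPrimitive (p : ℕ) [Fact p.Prime] (n : ℕ) (hn : 1 ≤ n)
    (τ : ℝ) (hτ : 1 ≤ τ) :
    WPadic p n τ =
      {x : Fin n → ℚ_[p] |
        {rq : (Fin n → ℤ) × ℕ | PPrimitive p n rq ∧ PadicApprox p n τ x rq}.Infinite} := by
  refine Set.Subset.antisymm (fun x hx => ?_) fun x hx => hx.mono fun rq h => h.2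
  change {rq : (Fin n → ℤ) × ℕ | PadicApprox p n τ x rq}.Infinite at hx
  change {rq : (Fin n → ℤ) × ℕ | PPrimitive p n rq ∧ PadicApprox p n τ x rq}.Infinite
  have hsmall : ∀ ε : ℝ, 0 < ε → ∃ rq : (Fin n → ℤ) × ℕ, PadicApprox p n τ x rq ∧
      ∀ i, (padicHeight n rq : ℝ) * ‖(rq.2 : ℚ_[p]) * x i - (rq.1 i : ℚ_[p])‖ < ε := by
    rcases hτ.eq_or_lt with rfl | h
    · exact exists_small_dirichlet p n x
    · exact exists_small_of_infinite p n τ h x hx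
  by_contra hfin
  rw [Set.not_infinite] at hfin
  -- by finiteness, a single `ε` is too small for every primitive solution at once
  have hev : ∀ᶠ ε : ℝ in nhdsWithin 0 (Set.Ioi 0),
      ∀ rq ∈ {rq : (Fin n → ℤ) × ℕ | PPrimitive p n rq ∧ PadicApprox p n τ x rq},
        ¬ ∀ i, (padicHeight n rq : ℝ) * ‖(rq.2 : ℚ_[p]) * x i - (rq.1 i : ℚ_[p])‖ < ε := by
    rw [eventually_all_finite hfin]
    rintro rq ⟨hprim, happ⟩
    have hex : ∃ i, (rq.2 : ℚ_[p]) * x i - (rq.1 i : ℚ_[p]) ≠ 0 := by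
      by_contra! hcon
      exact infinite_of_exact p n τ x rq hprim happ.1 hcon hfin
    obtain ⟨i, hi⟩ := hex
    have hpos : (0 : ℝ) < padicHeight n rq := by
      exact_mod_cast lt_of_lt_of_le happ.1 (le_max_left _ _)
    filter_upwards [Ioo_mem_nhdsGT (mul_pos hpos (norm_pos_iff.2 hi))] with ε hε hall
    exact (hall i).not_ge hε.2.le
  obtain ⟨ε, hε, hε0⟩ := (hev.and self_mem_nhdsWithin).exists
  obtain ⟨rq, happ, hrq⟩ := hsmall ε hε0
  obtain ⟨rq', hprim, happ', heq⟩ := exists_primitive_part p n τ hτ x rq.2 rq.1 happ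
  exact hε rq' ⟨hprim, happ'⟩ fun i => (heq i).trans_lt (hrq i)
end

section
/- Let p be a prime, n ≥ 1 an integer and τ ≥ 1 a real number. Then W*_{τ,n}(p) = ∪_{i_0=1}^{n} ∪_{f=1}^{∞} W_{τ,n}(p, i_0, f). -/
/-!
Every approximation `(r, q)` of a point `x` with `‖x i‖ ≤ p ^ f` for all `i`, where `f` is chosen
minimal in `ℕ`, satisfies `‖q‖ ≤ p ^ (-f)`: otherwise `f ≥ 1` and `‖q x i₀ - r i₀‖ > 1` at a coordinate `i₀`
of maximal norm. So the inclusion `⊇` is immediate, and `⊆` reduces to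
`infinite_normalized`: if `x` has infinitely many approximations, then it has infinitely many with
`‖q‖ = p ^ (-f)`. For `f = 0` these are the ones with `p ∤ q`, which are finite in number on the
liminf set; for `f ≥ 1` they are the ones with `‖q x i₀‖ = 1`.

To prove `infinite_normalized`, observe that an approximation with `‖q‖ < p ^ (-f)` has all entries
divisible by `p`, and that dividing by `p` keeps it an approximation because `τ ≥ 1`
(`PadicApprox.div_p`). Hence every approximation is `p ^ k` times a normalized one
(`PadicApprox.descend`). Suppose there are only finitely many normalized ones. Then none of them is
exact (`infinite_of_exact`: multiply by integers `1 + p j`). If `τ > 1`, an inexact pair has only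
finitely many multiples by `p ^ k` that are approximations, so there are finitely many
approximations altogether. If `τ = 1`, this last step fails, but the pairs formed by `q = p ^ f`
and the residue of `p ^ f x` modulo `p ^ k` are normalized approximations for every `k > f`, and an
inexact pair occurs for finitely many `k` only.
-/

open Filter
open scoped ENNReal

/-- The liminf set `W*_{τ,n}(p)`: points of `ℚ_pⁿ` approximable at order `τ` by
infinitely many `(r, q)` with `p ∣ q`, and only finitely many with `p ∤ q`. -/
def WStarPadic (p : ℕ) [Fact p.Prime] (n : ℕ) (τ : ℝ) : Set (Fin n → ℚ_[p]) :=
  {x | {rq : (Fin n → ℤ) × ℕ | p ∣ rq.2 ∧ PadicApprox p n τ x rq}.Infinite ∧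
    {rq : (Fin n → ℤ) × ℕ | ¬ p ∣ rq.2 ∧ PadicApprox p n τ x rq}.Finite}

/-- The set `W_{τ,n}(p, i₀, f)`: points `x ∈ ℚ_pⁿ` with `|x_{i₀}|_p = p^f`
admitting infinitely many approximations `(r, q)` with `|q x_{i₀}|_p = 1`. -/
def WPadicComp (p : ℕ) [Fact p.Prime] (n : ℕ) (τ : ℝ) (i₀ : Fin n) (f : ℕ) :
    Set (Fin n → ℚ_[p]) :=
  {x | ‖x i₀‖ = (p : ℝ) ^ (f : ℤ) ∧
    {rq : (Fin n → ℤ) × ℕ |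
      PadicApprox p n τ x rq ∧ ‖(rq.2 : ℚ_[p]) * x i₀‖ = 1}.Infinite}

/-! ### Heights and multiples of pairs -/

/-- The height `max(|r|, q)` of a pair `(r, q)`. -/
def pairHeight {n : ℕ} (rq : (Fin n → ℤ) × ℕ) : ℕ :=
  max rq.2 (Finset.univ.sup fun j => (rq.1 j).natAbs)

/-- The multiple `(m r, m q)` of a pair `(r, q)`. -/
def scalePair {n : ℕ} (m : ℕ) (rq : (Fin n → ℤ) × ℕ) : (Fin n → ℤ) × ℕ :=
  (fun i => (m : ℤ) * rq.1 i, m * rq.2)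

lemma padicApprox_iff {p : ℕ} [Fact p.Prime] {n : ℕ} {τ : ℝ} {x : Fin n → ℚ_[p]}
    {rq : (Fin n → ℤ) × ℕ} :
    PadicApprox p n τ x rq ↔ 0 < rq.2 ∧
      ∀ i, ‖(rq.2 : ℚ_[p]) * x i - ((rq.1 i : ℤ) : ℚ_[p])‖ < (pairHeight rq : ℝ) ^ (-τ) :=
  Iff.rfl

lemma le_pairHeight {n : ℕ} (rq : (Fin n → ℤ) × ℕ) : rq.2 ≤ pairHeight rq := le_max_left _ _

lemma mul_pairHeight_le {n : ℕ} {m : ℕ} (hm : 0 < m) (rq : (Fin n → ℤ) × ℕ) :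
    m * pairHeight rq ≤ pairHeight (scalePair m rq) := by
  rw [mul_comm, ← Nat.le_div_iff_mul_le hm]
  refine max_le ?_ (Finset.sup_le fun j _ => ?_)
  · rw [Nat.le_div_iff_mul_le hm, mul_comm]
    exact le_pairHeight (scalePair m rq)
  · rw [Nat.le_div_iff_mul_le hm, mul_comm]
    refine le_trans ?_ (le_max_right _ _)
    refine le_trans ?_ (Finset.le_sup (Finset.mem_univ j))
    simp [scalePair, Int.natAbs_mul]

section
variable {p : ℕ} [hp : Fact p.Prime] {n : ℕ} {τ : ℝ} {x : Fin n → ℚ_[p]}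

lemma norm_natCast_eq_one_of_not_dvd {q : ℕ} (h : ¬ p ∣ q) : ‖(q : ℚ_[p])‖ = 1 := by
  refine le_antisymm (by exact_mod_cast Padic.norm_int_le_one (p := p) (q : ℤ))
    (not_lt.1 fun hlt => h ?_)
  have := (Padic.norm_intCast_lt_one_iff (p := p) (k := (q : ℤ))).1 (by exact_mod_cast hlt)
  exact_mod_cast this

lemma not_dvd_of_norm_natCast_eq_one {q : ℕ} (h : ‖(q : ℚ_[p])‖ = 1) : ¬ p ∣ q := by
  intro hd
  have := (Padic.norm_intCast_lt_one_iff (p := p) (k := (q : ℤ))).2 (by exact_mod_cast hd)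
  rw [Int.cast_natCast, h] at this
  exact lt_irrefl _ this

lemma scalePair_error (m : ℕ) (rq : (Fin n → ℤ) × ℕ) (i : Fin n) :
    ((scalePair m rq).2 : ℚ_[p]) * x i - (((scalePair m rq).1 i : ℤ) : ℚ_[p]) =
      (m : ℚ_[p]) * ((rq.2 : ℚ_[p]) * x i - ((rq.1 i : ℤ) : ℚ_[p])) := by
  simp only [scalePair]
  push_cast
  ring

lemma PadicApprox.error_lt_one {rq : (Fin n → ℤ) × ℕ} (hτ : 1 ≤ τ)
    (h : PadicApprox p n τ x rq) (i : Fin n) :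
    ‖(rq.2 : ℚ_[p]) * x i - ((rq.1 i : ℤ) : ℚ_[p])‖ < 1 := by
  rw [padicApprox_iff] at h
  refine (h.2 i).trans_le (Real.rpow_le_one_of_one_le_of_nonpos ?_ (by linarith))
  exact_mod_cast h.1.trans_le (le_pairHeight rq)

lemma PadicApprox.norm_mul_le_one {rq : (Fin n → ℤ) × ℕ} (hτ : 1 ≤ τ)
    (h : PadicApprox p n τ x rq) (i : Fin n) : ‖(rq.2 : ℚ_[p]) * x i‖ ≤ 1 := by
  have h1 := (h.error_lt_one hτ i).le
  have h2 := Padic.norm_int_le_one (p := p) (rq.1 i)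
  have h3 := Padic.nonarchimedean ((rq.2 : ℚ_[p]) * x i - ((rq.1 i : ℤ) : ℚ_[p]))
    ((rq.1 i : ℤ) : ℚ_[p])
  rw [sub_add_cancel] at h3
  exact h3.trans (max_le h1 h2)

/-! ### Descent to normalized approximations -/

/-- Dividing an approximation by `p` multiplies the error by `p` and divides the height by at
least `p`, so for `τ ≥ 1` the quotient is again an approximation. -/
lemma PadicApprox.div_p {t : (Fin n → ℤ) × ℕ} (hτ : 1 ≤ τ)
    (h : PadicApprox p n τ x (scalePair p t)) : PadicApprox p n τ x t := by
  rw [padicApprox_iff] at h ⊢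
  have hp0 : 0 < p := hp.out.pos
  have hpR : (0 : ℝ) < p := by exact_mod_cast hp0
  have ht : 0 < t.2 := Nat.pos_of_mul_pos_left h.1
  refine ⟨ht, fun i => ?_⟩
  have hi := h.2 i
  rw [scalePair_error, norm_mul, Padic.norm_p] at hi
  have hH : (0 : ℝ) < pairHeight t := by exact_mod_cast ht.trans_le (le_pairHeight t)
  have hle : (pairHeight (scalePair p t) : ℝ) ^ (-τ) ≤ ((p : ℝ) * pairHeight t) ^ (-τ) := by
    apply Real.rpow_le_rpow_of_nonpos (by positivity) _ (by linarith)
    exact_mod_cast mul_pairHeight_le hp0 t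
  rw [Real.mul_rpow hpR.le hH.le] at hle
  have hp1 : (p : ℝ) ^ (-τ) ≤ (p : ℝ)⁻¹ := by
    rw [← Real.rpow_neg_one]
    exact Real.rpow_le_rpow_of_exponent_le (by exact_mod_cast hp.out.one_le) (by linarith)
  have : (p : ℝ)⁻¹ * ‖(t.2 : ℚ_[p]) * x i - ((t.1 i : ℤ) : ℚ_[p])‖ <
      (p : ℝ)⁻¹ * (pairHeight t : ℝ) ^ (-τ) :=
    hi.trans_le (hle.trans (by gcongr))
  exact lt_of_mul_lt_mul_left this (by positivity)

/-- Every approximation is a multiple by a power of `p` of one whose denominator has norm exactly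
`p ^ (-f)`. -/
lemma PadicApprox.descend (hτ : 1 ≤ τ) (f : ℕ) (hx : ∀ i, ‖x i‖ ≤ (p : ℝ) ^ f)
    (hq : ∀ rq, PadicApprox p n τ x rq → ‖(rq.2 : ℚ_[p])‖ ≤ ((p : ℝ) ^ f)⁻¹) (N : ℕ) :
    ∀ rq : (Fin n → ℤ) × ℕ, rq.2 ≤ N → PadicApprox p n τ x rq →
      ∃ (k : ℕ) (t : (Fin n → ℤ) × ℕ), PadicApprox p n τ x t ∧
        ‖(t.2 : ℚ_[p])‖ = ((p : ℝ) ^ f)⁻¹ ∧ rq = scalePair (p ^ k) t := by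
  have hpR : (0 : ℝ) < p := by exact_mod_cast hp.out.pos
  induction N with
  | zero => intro rq h0 h; exact absurd h.1 (by omega)
  | succ N ih =>
    intro rq hN h
    rcases (hq rq h).eq_or_lt with heq | hlt
    · exact ⟨0, rq, h, heq, by simp [scalePair]⟩
    have hpf : (0 : ℝ) < (p : ℝ) ^ f := by positivity
    have hlt1 : ‖(rq.2 : ℚ_[p])‖ < 1 :=
      hlt.trans_le (inv_le_one_of_one_le₀ (one_le_pow₀ (by exact_mod_cast hp.out.one_le)))
    obtain ⟨q', hq'⟩ : p ∣ rq.2 := by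
      have := (Padic.norm_intCast_lt_one_iff (p := p) (k := (rq.2 : ℤ))).1 (by exact_mod_cast hlt1)
      exact_mod_cast this
    have hr : ∀ i, (p : ℤ) ∣ rq.1 i := by
      intro i
      rw [← Padic.norm_intCast_lt_one_iff]
      have h1 := h.error_lt_one hτ i
      have h2 : ‖(rq.2 : ℚ_[p]) * x i‖ < 1 := by
        rw [norm_mul]
        calc ‖(rq.2 : ℚ_[p])‖ * ‖x i‖ ≤ ‖(rq.2 : ℚ_[p])‖ * (p : ℝ) ^ f := by gcongr; exact hx i
          _ < ((p : ℝ) ^ f)⁻¹ * (p : ℝ) ^ f := by gcongr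
          _ = 1 := inv_mul_cancel₀ hpf.ne'
      have h3 := Padic.nonarchimedean ((rq.2 : ℚ_[p]) * x i)
        (-((rq.2 : ℚ_[p]) * x i - ((rq.1 i : ℤ) : ℚ_[p])))
      rw [norm_neg, show (rq.2 : ℚ_[p]) * x i + -((rq.2 : ℚ_[p]) * x i - ((rq.1 i : ℤ) : ℚ_[p]))
        = ((rq.1 i : ℤ) : ℚ_[p]) by ring] at h3
      exact h3.trans_lt (max_lt h2 h1)
    choose r' hr' using hr
    have hs : rq = scalePair p (r', q') := by
      ext1
      · funext i; exact hr' i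
      · exact hq'
    have ht : PadicApprox p n τ x (r', q') := PadicApprox.div_p hτ (hs ▸ h)
    have hlt' : q' < rq.2 := by
      rw [hq']
      exact (Nat.lt_mul_iff_one_lt_left ht.1).2 hp.out.one_lt
    obtain ⟨k, t, h1, h2, h3⟩ := ih (r', q') (by simp only; omega) ht
    refine ⟨k + 1, t, h1, h2, ?_⟩
    rw [hs, h3]
    simp only [scalePair, Prod.mk.injEq]
    refine ⟨?_, by ring⟩
    funext i
    push_cast
    ring

/-! ### Infinitely many normalized approximations -/

/-- An exact normalized pair yields infinitely many by multiplication with `1 + p j`. -/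
lemma infinite_of_exact_s11 {f : ℕ} {t : (Fin n → ℤ) × ℕ} (ht0 : 0 < t.2)
    (ht : ‖(t.2 : ℚ_[p])‖ = ((p : ℝ) ^ f)⁻¹)
    (hex : ∀ i, (t.2 : ℚ_[p]) * x i - ((t.1 i : ℤ) : ℚ_[p]) = 0) :
    {rq | PadicApprox p n τ x rq ∧ ‖(rq.2 : ℚ_[p])‖ = ((p : ℝ) ^ f)⁻¹}.Infinite := by
  refine Set.infinite_of_injective_forall_mem (f := fun j : ℕ => scalePair (1 + p * j) t) ?_ ?_
  · intro a b hab
    have h2 : (1 + p * a) * t.2 = (1 + p * b) * t.2 := congrArg Prod.snd hab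
    have h3 := Nat.eq_of_mul_eq_mul_right ht0 h2
    exact Nat.eq_of_mul_eq_mul_left hp.out.pos (by omega)
  · intro j
    have hpos : 0 < (scalePair (1 + p * j) t).2 := Nat.mul_pos (by omega) ht0
    refine ⟨padicApprox_iff.2 ⟨hpos, fun i => ?_⟩, ?_⟩
    · rw [scalePair_error, hex i, mul_zero, norm_zero]
      have : (0 : ℝ) < pairHeight (scalePair (1 + p * j) t) := by
        exact_mod_cast hpos.trans_le (le_pairHeight _)
      positivity
    · have h1 : ‖((1 + p * j : ℕ) : ℚ_[p])‖ = 1 := by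
        refine norm_natCast_eq_one_of_not_dvd fun hd' => ?_
        exact hp.out.one_lt.ne' (Nat.dvd_one.1 ((Nat.dvd_add_left (dvd_mul_right p j)).1 hd'))
      have h2 : (scalePair (1 + p * j) t).2 = (1 + p * j) * t.2 := rfl
      rw [h2, Nat.cast_mul, norm_mul, h1, one_mul, ht]

/-- For `τ > 1`, an inexact pair has finitely many multiples by powers of `p` that are
approximations. -/
lemma finite_scales (hτ : 1 < τ) {t : (Fin n → ℤ) × ℕ} {i : Fin n}
    (hi : (t.2 : ℚ_[p]) * x i - ((t.1 i : ℤ) : ℚ_[p]) ≠ 0) :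
    {k : ℕ | PadicApprox p n τ x (scalePair (p ^ k) t)}.Finite := by
  have hpR : (1 : ℝ) < p := by exact_mod_cast hp.out.one_lt
  have hpR0 : (0 : ℝ) < p := by linarith
  set c := ‖(t.2 : ℚ_[p]) * x i - ((t.1 i : ℤ) : ℚ_[p])‖ with hc
  have hc0 : 0 < c := norm_pos_iff.2 hi
  have hb : 1 < (p : ℝ) ^ (τ - 1) := Real.one_lt_rpow hpR (by linarith)
  obtain ⟨K, hK⟩ := pow_unbounded_of_one_lt (1 / c) hb
  refine (Set.finite_lt_nat K).subset fun k hk => ?_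
  rw [Set.mem_ofPred_eq, padicApprox_iff] at hk
  have h1 := hk.2 i
  rw [scalePair_error, norm_mul, ← hc, Nat.cast_pow, norm_pow, Padic.norm_p] at h1
  have ht0 : 0 < t.2 := Nat.pos_of_mul_pos_left hk.1
  have h2 : p ^ k ≤ pairHeight (scalePair (p ^ k) t) :=
    le_trans (Nat.le_mul_of_pos_right _ ht0) (le_pairHeight (scalePair (p ^ k) t))
  have h3 : (pairHeight (scalePair (p ^ k) t) : ℝ) ^ (-τ) ≤ ((p : ℝ) ^ k) ^ (-τ) :=
    Real.rpow_le_rpow_of_nonpos (by positivity) (by exact_mod_cast h2) (by linarith)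
  have h4 : ((p : ℝ) ^ k) ^ (-τ) = ((p : ℝ)⁻¹) ^ k * (((p : ℝ) ^ (τ - 1)) ^ k)⁻¹ := by
    rw [inv_pow, ← mul_inv, ← mul_pow, Real.rpow_neg (by positivity), ← Real.rpow_natCast,
      ← Real.rpow_mul hpR0.le, mul_comm (k : ℝ) τ, Real.rpow_mul hpR0.le, Real.rpow_natCast,
      Real.rpow_sub_one hpR0.ne', mul_div_cancel₀ _ hpR0.ne']
  rw [h4] at h3
  have h5 : c < (((p : ℝ) ^ (τ - 1)) ^ k)⁻¹ :=
    lt_of_mul_lt_mul_left (h1.trans_le h3) (by positivity)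
  have h6 : ((p : ℝ) ^ (τ - 1)) ^ k < 1 / c := by
    rw [lt_one_div (by positivity) hc0, one_div]
    exact h5
  exact (pow_lt_pow_iff_right₀ hb).1 (h6.trans hK)

/-- If `p ^ f x` is integral, the denominator `p ^ f` admits numerators `r ∈ [0, p ^ k)` with error
at most `p ^ (-k)`, and for `τ = 1` and `k > f` these are approximations. -/
lemma exists_residue (f : ℕ) (hx : ∀ i, ‖x i‖ ≤ (p : ℝ) ^ f) (k : ℕ) (hk : f < k) :
    ∃ r : Fin n → ℤ, PadicApprox p n 1 x (r, p ^ f) ∧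
      ∀ i, ‖((p ^ f : ℕ) : ℚ_[p]) * x i - ((r i : ℤ) : ℚ_[p])‖ ≤ ((p : ℝ)⁻¹) ^ k := by
  have hpR : (1 : ℝ) < p := by exact_mod_cast hp.out.one_lt
  have hpR0 : (0 : ℝ) < p := by linarith
  have hy : ∀ i, ‖((p ^ f : ℕ) : ℚ_[p]) * x i‖ ≤ 1 := by
    intro i
    rw [norm_mul, Nat.cast_pow, norm_pow, Padic.norm_p, inv_pow]
    exact inv_mul_le_one_of_le₀ (hx i) (by positivity)
  let y : Fin n → ℤ_[p] := fun i => ⟨_, hy i⟩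
  have herr : ∀ i, ‖((p ^ f : ℕ) : ℚ_[p]) * x i - ((((y i).appr k : ℕ) : ℤ) : ℚ_[p])‖ ≤
      ((p : ℝ)⁻¹) ^ k := by
    intro i
    have h := (PadicInt.norm_le_pow_iff_mem_span_pow _ k).2 (PadicInt.appr_spec k (y i))
    rw [zpow_neg, zpow_natCast, ← inv_pow] at h
    have h' := h
    rw [PadicInt.norm_def] at h'
    push_cast at h' ⊢
    simpa [y] using h'
  refine ⟨fun i => (y i).appr k, padicApprox_iff.2 ⟨pow_pos hp.out.pos f, fun i => ?_⟩, herr⟩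
  refine (herr i).trans_lt ?_
  have hlt : pairHeight ((fun i => ((y i).appr k : ℤ)), p ^ f) < p ^ k := by
    refine max_lt (Nat.pow_lt_pow_right hp.out.one_lt hk) ?_
    rw [Finset.sup_lt_iff (pow_pos hp.out.pos k)]
    intro j _
    simpa using PadicInt.appr_lt (y j) k
  have hpos : 0 < pairHeight ((fun i => ((y i).appr k : ℤ)), p ^ f) :=
    (pow_pos hp.out.pos f).trans_le (le_pairHeight ((fun i => ((y i).appr k : ℤ)), p ^ f))
  rw [Real.rpow_neg_one, inv_pow]
  exact inv_strictAnti₀ (by exact_mod_cast hpos) (by exact_mod_cast hlt)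

/-- A point with infinitely many approximations has infinitely many of the largest denominator norm
permitted by `hq`. -/
lemma infinite_normalized (hτ : 1 ≤ τ) (f : ℕ) (hx : ∀ i, ‖x i‖ ≤ (p : ℝ) ^ f)
    (hq : ∀ rq, PadicApprox p n τ x rq → ‖(rq.2 : ℚ_[p])‖ ≤ ((p : ℝ) ^ f)⁻¹)
    (hinf : {rq | PadicApprox p n τ x rq}.Infinite) :
    {rq | PadicApprox p n τ x rq ∧ ‖(rq.2 : ℚ_[p])‖ = ((p : ℝ) ^ f)⁻¹}.Infinite := by
  intro hfin
  have hpR : (1 : ℝ) < p := by exact_mod_cast hp.out.one_lt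
  have hne : ∀ t : (Fin n → ℤ) × ℕ, PadicApprox p n τ x t →
      ‖(t.2 : ℚ_[p])‖ = ((p : ℝ) ^ f)⁻¹ →
      ∃ i, (t.2 : ℚ_[p]) * x i - ((t.1 i : ℤ) : ℚ_[p]) ≠ 0 := by
    intro t h1 h2
    by_contra! hcon
    exact infinite_of_exact_s11 h1.1 h2 hcon hfin
  rcases hτ.eq_or_lt with rfl | hτ1
  · choose! r hr1 hr2 using exists_residue (p := p) (x := x) f hx
    have hnorm : ‖((p ^ f : ℕ) : ℚ_[p])‖ = ((p : ℝ) ^ f)⁻¹ := by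
      rw [Nat.cast_pow, norm_pow, Padic.norm_p, inv_pow]
    refine Set.Ioi_infinite f (Set.Finite.subset
      (hfin.biUnion (t := fun t => {k | f < k ∧ (r k, p ^ f) = t}) ?_) ?_)
    · rintro t ⟨h1, h2⟩
      obtain ⟨i, hi⟩ := hne t h1 h2
      obtain ⟨K, hK⟩ := exists_pow_lt_of_lt_one (norm_pos_iff.2 hi)
        (inv_lt_one_of_one_lt₀ hpR)
      refine (Set.finite_lt_nat K).subset ?_
      rintro k ⟨hk, rfl⟩
      refine Set.mem_ofPred_eq ▸ not_le.1 fun hKk => ?_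
      have h3 := (hr2 k hk i).trans
        (pow_le_pow_of_le_one (by positivity) (inv_le_one_of_one_le₀ hpR.le) hKk)
      exact absurd hK (not_lt.2 h3)
    · intro k hk
      exact Set.mem_biUnion (show (r k, p ^ f) ∈ _ from ⟨hr1 k hk, hnorm⟩) ⟨hk, rfl⟩
  · refine hinf (Set.Finite.subset (hfin.biUnion
      (t := fun t => (fun k => scalePair (p ^ k) t) ''
        {k : ℕ | PadicApprox p n τ x (scalePair (p ^ k) t)}) ?_) ?_)
    · rintro t ⟨h1, h2⟩
      obtain ⟨i, hi⟩ := hne t h1 h2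
      exact (finite_scales hτ1 hi).image _
    · intro rq h
      obtain ⟨k, t, h1, h2, rfl⟩ := PadicApprox.descend hτ f hx hq rq.2 rq le_rfl h
      exact Set.mem_biUnion (show t ∈ _ from ⟨h1, h2⟩) ⟨k, h, rfl⟩

end

/-! ### The decomposition of the liminf set -/

theorem WStarPadic_eq_iUnion (p : ℕ) [Fact p.Prime] (n : ℕ) (hn : 1 ≤ n)
    (τ : ℝ) (hτ : 1 ≤ τ) :
    WStarPadic p n τ =
      ⋃ i₀ : Fin n, ⋃ f : ℕ, ⋃ (_ : 1 ≤ f), WPadicComp p n τ i₀ f := by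
  have hpp : p.Prime := Fact.out
  have hpR : (1 : ℝ) < p := by exact_mod_cast hpp.one_lt
  ext x
  simp only [Set.mem_iUnion]
  constructor
  · rintro ⟨hinf, hfin⟩
    have hinf' : {rq | PadicApprox p n τ x rq}.Infinite := hinf.mono fun rq h => h.2
    have : Nonempty (Fin n) := ⟨⟨0, hn⟩⟩
    obtain ⟨i₀, hi₀⟩ := Finite.exists_max fun i => ‖x i‖
    rcases le_or_gt ‖x i₀‖ 1 with hle | hgt
    · exfalso
      refine infinite_normalized hτ 0 (fun i => by simpa using (hi₀ i).trans hle) ?_ hinf'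
        (hfin.subset ?_)
      · intro rq _
        simpa using Padic.norm_int_le_one (p := p) (rq.2 : ℤ)
      · rintro rq ⟨h1, h2⟩
        exact ⟨not_dvd_of_norm_natCast_eq_one (by simpa using h2), h1⟩
    · have hx0 : x i₀ ≠ 0 := by
        rintro h
        rw [h, norm_zero] at hgt
        linarith
      have hval := Padic.norm_eq_zpow_neg_valuation hx0
      have hpos : 0 < -(x i₀).valuation := by
        rw [hval] at hgt
        exact (one_lt_zpow_iff_right₀ hpR).1 hgt
      obtain ⟨f, hf⟩ := Int.eq_ofNat_of_zero_le hpos.le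
      rw [hf] at hval
      have hval' : ‖x i₀‖ = (p : ℝ) ^ f := by rw [hval]; exact zpow_natCast _ _
      have hpf : (0 : ℝ) < (p : ℝ) ^ f := by positivity
      refine ⟨i₀, f, by omega, hval, ?_⟩
      refine (infinite_normalized hτ f (fun i => hval' ▸ hi₀ i) ?_ hinf').mono ?_
      · intro rq h
        have := h.norm_mul_le_one hτ i₀
        rw [norm_mul, hval'] at this
        rwa [← one_div, le_div_iff₀ hpf]
      · rintro rq ⟨h1, h2⟩
        refine ⟨h1, ?_⟩
        rw [norm_mul, h2, hval', inv_mul_cancel₀ hpf.ne']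
  · rintro ⟨i₀, f, hf, hx, hinf⟩
    have hgt : 1 < ‖x i₀‖ := by
      rw [hx, zpow_natCast]
      exact one_lt_pow₀ hpR (by omega)
    refine ⟨hinf.mono ?_, ?_⟩
    · rintro rq ⟨h1, h2⟩
      refine ⟨?_, h1⟩
      by_contra hnd
      rw [norm_mul, norm_natCast_eq_one_of_not_dvd hnd, one_mul] at h2
      linarith
    · refine Set.finite_empty.subset ?_
      rintro rq ⟨hnd, h⟩
      have h2 := h.norm_mul_le_one hτ i₀
      rw [norm_mul, norm_natCast_eq_one_of_not_dvd hnd, one_mul] at h2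
      exact absurd h2 (not_le.2 hgt)
end

section
/- Let p be a prime, n ≥ 1 an integer, τ > 0 a real number, i_0 ∈ {1,…,n} and f ∈ ℕ. Then for every s > (n+1)/τ the s-dimensional Hausdorff measure of W_{τ,n}(p, i_0, f) is zero; in particular the Hausdorff dimension of W_{τ,n}(p, i_0, f), computed in ℚ_p^n with the metric induced by the p-adic supremum norm, is at most (n+1)/τ. -/
/-!
The set `W_{τ,n}(p, i₀, f)` is a limsup set. For a pair `(r, q)` with `N = max(|r|, q)`, the
conditions `|x_{i₀}|_p = p^f` and `|q x_{i₀}|_p = 1` force `|q|_p = p^{-f}`, so dividing by `q` in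
`|qx - r|_p < N^{-τ}` costs only the constant factor `p^f`: the points approximated by `(r, q)` form
a set of diameter at most `p^f N^{-τ}` (`ediam_approxSet_le`). The sum of the `s`-th powers of
these diameters is, up to a constant, dominated by `∑ ‖v‖^{-τ s}` over the nonzero lattice points `v = (q, r)` of
`ℤ^{n+1}`, which converges since `τ s > n + 1` (`tsum_ediam_approxSet_ne_top`). The Hausdorff
version of the Borel–Cantelli lemma (`hausdorffMeasure_limsup_eq_zero`) concludes.
-/

open MeasureTheory Filter
open scoped ENNReal

noncomputable instance (p : ℕ) [Fact p.Prime] : MeasurableSpace ℚ_[p] := borel _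
instance (p : ℕ) [Fact p.Prime] : BorelSpace ℚ_[p] := ⟨rfl⟩

open scoped NNReal Topology

/-- Hausdorff–Cantelli lemma: the points lying in infinitely many of the sets `B i` form an
`s`-null set as soon as the `s`-th powers of the diameters of the `B i` are summable. The tails of
the family, outside growing finite sets of indices, serve as covers. -/
theorem hausdorffMeasure_limsup_eq_zero {X ι : Type*} [EMetricSpace X] [MeasurableSpace X]
    [BorelSpace X] [Countable ι] (B : ι → Set X) {s : ℝ} (hs : 0 < s)
    (hB : ∑' i, Metric.ediam (B i) ^ s ≠ ∞) :
    μH[s] {x | {i | x ∈ B i}.Infinite} = 0 := by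
  have htail := ENNReal.tendsto_tsum_compl_atTop_zero hB
  have hr : Tendsto (fun F : Finset ι =>
      (∑' i : {i // i ∉ F}, Metric.ediam (B i) ^ s) ^ s⁻¹) atTop (𝓝 0) := by
    have h := (ENNReal.continuous_rpow_const (y := s⁻¹)).tendsto 0 |>.comp htail
    rwa [ENNReal.zero_rpow_of_pos (inv_pos.2 hs)] at h
  have key := Measure.hausdorffMeasure_le_liminf_tsum (ι := fun F : Finset ι => {i // i ∉ F}) s
    {x | {i | x ∈ B i}.Infinite} _ hr (fun F i => B i)
    (Eventually.of_forall fun F i => ?_) (Eventually.of_forall fun F x hx => ?_)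
  · rw [htail.liminf_eq] at key
    exact nonpos_iff_eq_zero.1 key
  ·
    -- each diameter in the tail is at most the `1/s`-th power of the whole tail sum
    rw [← ENNReal.rpow_le_rpow_iff hs, ENNReal.rpow_inv_rpow hs.ne']
    exact ENNReal.le_tsum (f := fun i : {i // i ∉ F} => Metric.ediam (B i) ^ s) i
  · obtain ⟨i, hi, hiF⟩ := Set.Infinite.exists_notMem_finset hx F
    exact Set.mem_iUnion.2 ⟨⟨i, hiF⟩, hi⟩

/-- The pair `(r, q) ∈ ℤⁿ × ℕ` as the vector `(q, r)` of `ℝ^{n+1}`, whose supremum norm is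
`max(|r|, q)`. -/
def pairVec (n : ℕ) (rq : (Fin n → ℤ) × ℕ) : Fin (n + 1) → ℝ :=
  Fin.cons (rq.2 : ℝ) fun i => (rq.1 i : ℝ)

theorem pairVec_injective (n : ℕ) : Function.Injective (pairVec n) := by
  rintro ⟨r, q⟩ ⟨r', q'⟩ h
  obtain ⟨h1, h2⟩ := Fin.cons_injective2 h
  refine Prod.ext (funext fun i => ?_) ?_
  · have := congrFun h2 i
    exact_mod_cast this
  · exact_mod_cast h1

theorem norm_pairVec_le (n : ℕ) (rq : (Fin n → ℤ) × ℕ) :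
    ‖pairVec n rq‖ ≤ ((max rq.2 (Finset.univ.sup fun j => (rq.1 j).natAbs) : ℕ) : ℝ) := by
  refine (pi_norm_le_iff_of_nonneg (Nat.cast_nonneg _)).2 fun i => ?_
  refine Fin.cases ?_ (fun j => ?_) i
  · simp [pairVec]
  · have h : (rq.1 j).natAbs ≤ max rq.2 (Finset.univ.sup fun j => (rq.1 j).natAbs) :=
      (Finset.le_sup (f := fun j => (rq.1 j).natAbs) (Finset.mem_univ j)).trans (le_max_right _ _)
    have h' : ‖pairVec n rq j.succ‖ = ((rq.1 j).natAbs : ℝ) := by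
      simp [pairVec, Nat.cast_natAbs]
    rw [h']
    exact_mod_cast h

theorem norm_pairVec_pos (n : ℕ) {rq : (Fin n → ℤ) × ℕ} (h : 0 < rq.2) : 0 < ‖pairVec n rq‖ := by
  refine norm_pos_iff.2 fun h0 => ?_
  have := congrFun h0 0
  simp [pairVec] at this
  omega

theorem pairVec_mem_span (n : ℕ) (rq : (Fin n → ℤ) × ℕ) :
    pairVec n rq ∈ Submodule.span ℤ (Set.range (Pi.basisFun ℝ (Fin (n + 1)))) := by
  refine (Module.Basis.mem_span_iff_repr_mem ℤ (Pi.basisFun ℝ (Fin (n + 1))) _).2 fun i => ?_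
  rw [Pi.basisFun_repr]
  refine Fin.cases ⟨(rq.2 : ℤ), ?_⟩ (fun j => ⟨rq.1 j, ?_⟩) i
  · simp [pairVec]
  · simp [pairVec]

theorem summable_norm_pairVec (n : ℕ) {a : ℝ} (ha : (n : ℝ) + 1 < a) :
    Summable fun rq : (Fin n → ℤ) × ℕ => ‖pairVec n rq‖ ^ (-a) := by
  have aux : ∀ (L : Submodule ℤ (Fin (n + 1) → ℝ)) [DiscreteTopology L] [IsZLattice ℝ L],
      (∀ rq, pairVec n rq ∈ L) → Summable fun rq => ‖pairVec n rq‖ ^ (-a) := by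
    intro L _ _ hL
    have hrank : Module.finrank ℤ L = n + 1 := by
      rw [ZLattice.rank ℝ L, Module.finrank_fin_fun]
    have hsum := ZLattice.summable_norm_rpow L (-a) (by rw [hrank]; push_cast; linarith)
    have hinj : Function.Injective fun rq => (⟨pairVec n rq, hL rq⟩ : L) :=
      fun x y h => pairVec_injective n (congrArg Subtype.val h)
    refine (hsum.comp_injective hinj).congr fun rq => ?_
    rw [Function.comp_apply, Submodule.coe_norm]
  exact aux _ (pairVec_mem_span n)

/-- The points on the sphere `|x_{i₀}|_p = p^f` that are approximated by the pair `(r, q)`. -/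
def approxSet (p : ℕ) [Fact p.Prime] (n : ℕ) (τ : ℝ) (i₀ : Fin n) (f : ℕ)
    (rq : (Fin n → ℤ) × ℕ) : Set (Fin n → ℚ_[p]) :=
  {x | ‖x i₀‖ = (p : ℝ) ^ (f : ℤ) ∧ PadicApprox p n τ x rq ∧ ‖(rq.2 : ℚ_[p]) * x i₀‖ = 1}

theorem ediam_approxSet_le (p : ℕ) [Fact p.Prime] (n : ℕ) {τ : ℝ} (hτ : 0 < τ) (i₀ : Fin n)
    (f : ℕ) (rq : (Fin n → ℤ) × ℕ) :
    Metric.ediam (approxSet p n τ i₀ f rq) ≤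
      ENNReal.ofReal ((p : ℝ) ^ (f : ℤ) * ‖pairVec n rq‖ ^ (-τ)) := by
  refine Metric.ediam_le ?_
  rintro x ⟨hx, ⟨hq, hxr⟩, hqx⟩ y ⟨-, ⟨-, hyr⟩, -⟩
  rw [norm_mul, hx] at hqx
  have hN : ((max rq.2 (Finset.univ.sup fun j => (rq.1 j).natAbs) : ℕ) : ℝ) ^ (-τ) ≤
      ‖pairVec n rq‖ ^ (-τ) :=
    Real.rpow_le_rpow_of_nonpos (norm_pairVec_pos n hq) (norm_pairVec_le n rq) (by linarith)
  have hpf : 0 ≤ (p : ℝ) ^ (f : ℤ) := by positivity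
  rw [edist_dist]
  refine ENNReal.ofReal_le_ofReal ((dist_pi_le_iff (by positivity)).2 fun i => ?_)
  -- the ultrametric inequality applied to `q (x i - y i) = (q x i - r i) - (q y i - r i)`
  have hdiff : ‖(rq.2 : ℚ_[p]) * (x i - y i)‖ ≤ ‖pairVec n rq‖ ^ (-τ) := by
    have h := Padic.nonarchimedean ((rq.2 : ℚ_[p]) * x i - ((rq.1 i : ℤ) : ℚ_[p]))
      (-((rq.2 : ℚ_[p]) * y i - ((rq.1 i : ℤ) : ℚ_[p])))
    rw [norm_neg] at h
    have e : (rq.2 : ℚ_[p]) * (x i - y i) = ((rq.2 : ℚ_[p]) * x i - ((rq.1 i : ℤ) : ℚ_[p])) +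
      -((rq.2 : ℚ_[p]) * y i - ((rq.1 i : ℤ) : ℚ_[p])) := by ring
    rw [e]
    exact h.trans ((max_le (hxr i).le (hyr i).le).trans hN)
  rw [norm_mul] at hdiff
  calc dist (x i) (y i) = (p : ℝ) ^ (f : ℤ) * (‖(rq.2 : ℚ_[p])‖ * ‖x i - y i‖) := by
        rw [dist_eq_norm, ← mul_assoc, mul_comm _ ‖(rq.2 : ℚ_[p])‖, hqx, one_mul]
    _ ≤ _ := mul_le_mul_of_nonneg_left hdiff hpf

theorem tsum_ediam_approxSet_ne_top (p : ℕ) [Fact p.Prime] (n : ℕ) {τ : ℝ} (hτ : 0 < τ)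
    (i₀ : Fin n) (f : ℕ) {s : ℝ} (hs : ((n : ℝ) + 1) / τ < s) :
    ∑' rq, Metric.ediam (approxSet p n τ i₀ f rq) ^ s ≠ ∞ := by
  have hs0 : 0 < s := lt_of_le_of_lt (by positivity) hs
  have hsum := (summable_norm_pairVec n (a := τ * s)
    (by rwa [div_lt_iff₀ hτ, mul_comm] at hs)).mul_left (((p : ℝ) ^ (f : ℤ)) ^ s)
  refine ne_top_of_le_ne_top hsum.tsum_ofReal_ne_top (ENNReal.tsum_le_tsum fun rq => ?_)
  refine (ENNReal.rpow_le_rpow (ediam_approxSet_le p n hτ i₀ f rq) hs0.le).trans_eq ?_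
  rw [ENNReal.ofReal_rpow_of_nonneg (by positivity) hs0.le,
    Real.mul_rpow (by positivity) (by positivity), ← Real.rpow_mul (norm_nonneg _), neg_mul]

theorem hausdorffMeasure_WPadicComp_eq_zero (p : ℕ) [Fact p.Prime] (n : ℕ)
    (hn : 1 ≤ n) (τ : ℝ) (hτ : 0 < τ) (i₀ : Fin n) (f : ℕ) (hf : 1 ≤ f) :
    (∀ s : ℝ, ((n : ℝ) + 1) / τ < s → μH[s] (WPadicComp p n τ i₀ f) = 0) ∧
    dimH (WPadicComp p n τ i₀ f) ≤ ENNReal.ofReal (((n : ℝ) + 1) / τ) := by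
  have hzero : ∀ s : ℝ, ((n : ℝ) + 1) / τ < s → μH[s] (WPadicComp p n τ i₀ f) = 0 := by
    intro s hs
    refine measure_mono_null ?_ (hausdorffMeasure_limsup_eq_zero (approxSet p n τ i₀ f)
      (lt_of_le_of_lt (by positivity) hs) (tsum_ediam_approxSet_ne_top p n hτ i₀ f hs))
    rintro x ⟨hx, hinf⟩
    exact hinf.mono fun rq h => ⟨hx, h⟩
  refine ⟨hzero, le_of_forall_gt_imp_ge_of_dense fun c hc => ?_⟩
  obtain ⟨d, hd, hdc⟩ := ENNReal.lt_iff_exists_nnreal_btwn.1 hc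
  refine (dimH_le_of_hausdorffMeasure_ne_top ?_).trans hdc.le
  rw [hzero d (by
    rw [← ENNReal.ofReal_coe_nnreal] at hd
    exact (ENNReal.ofReal_lt_ofReal_iff_of_nonneg (by positivity)).1 hd)]
  exact ENNReal.zero_ne_top
end
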